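/- (Integration of the Schwarzschild background equations.) Let I ⊆ ℝ be an open interval and let φ, ℰ : I → ℝ be differentiable with φ′ = −½φ² − ℰ and ℰ′ = −(3/2)φℰ on I. Suppose φ > 0, ℰ < 0, and K := −ℰ + ¼φ² > 0 on I, and define the areal radius r := K^{−1/2}. Then there exists a constant m > 0 such that for every s ∈ I: r(s) > 2m, ℰ(s) = −2m/r(s)³, and φ(s) = (2/r(s))·√(1 − 2m/r(s)). -/

import Mathlib

/-! By the background equations `K′ = -φK`, so `r = K^{-1/2}` satisfies `r′ = φr/2`, and therefore
`(ℰr³)′ = -(3/2)φℰr³ + (3/2)φℰr³ = 0`. The constant `m = -ℰr³/2` is the mass, and the formula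
for `φ` is the definition of `K` solved for `φ`: as `r²K = 1`, one has
`1 - 2m/r = 1 + ℰr² = (φr/2)²`.
-/

theorem is_const_of_hasDerivWithinAt_eq_zero {𝕜 E : Type*} [RCLike 𝕜] [NormedAddCommGroup E]
    [NormedSpace 𝕜 E] {S : Set 𝕜} (hS : Convex ℝ S) {f : 𝕜 → E}
    (hf : ∀ x ∈ S, HasDerivWithinAt f 0 S x) {x y : 𝕜} (hx : x ∈ S) (hy : y ∈ S) : f x = f y := by
  have hle := hS.norm_image_sub_le_of_norm_hasDerivWithin_le hf
    (fun _ _ => norm_zero.le) hy hx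
  rwa [zero_mul, norm_le_zero_iff, sub_eq_zero] at hle

/-- The Gaussian curvature `K` of the 2-sheets, as a function of the values of the sheet expansion
`φ` and the electric Weyl scalar `ℰ` at a point. -/
noncomputable def sheetCurvature (φ ℰ : ℝ) : ℝ :=
  -ℰ + (1 / 4) * φ ^ 2

/-- The areal radius `r`, defined by `K = 1 / r ^ 2`; meaningful where the curvature `K` is
positive. -/
noncomputable def arealRadius (φ ℰ : ℝ) : ℝ :=
  sheetCurvature φ ℰ ^ (-(1 : ℝ) / 2)

/-- The Schwarzschild mass `m` read off from the values of `φ` and `ℰ` at a point, normalized so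
that `ℰ = -2m / r ^ 3`. -/
noncomputable def schwarzschildMass (φ ℰ : ℝ) : ℝ :=
  -ℰ * arealRadius φ ℰ ^ 3 / 2

section Pointwise

variable {φ ℰ : ℝ}

theorem arealRadius_pos (hK : 0 < sheetCurvature φ ℰ) : 0 < arealRadius φ ℰ :=
  Real.rpow_pos_of_pos hK _

theorem arealRadius_sq_mul_sheetCurvature (hK : 0 < sheetCurvature φ ℰ) :
    arealRadius φ ℰ ^ 2 * sheetCurvature φ ℰ = 1 := by
  have hsq : arealRadius φ ℰ ^ 2 = (sheetCurvature φ ℰ)⁻¹ := by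
    rw [arealRadius, ← Real.rpow_mul_natCast hK.le, ← Real.rpow_neg_one]
    norm_num
  rw [hsq, inv_mul_cancel₀ hK.ne']

theorem schwarzschildMass_pos (hℰ : ℰ < 0) : 0 < schwarzschildMass φ ℰ := by
  have hK : 0 < sheetCurvature φ ℰ :=
    add_pos_of_pos_of_nonneg (neg_pos.2 hℰ) (by positivity)
  exact half_pos (mul_pos (neg_pos.2 hℰ) (pow_pos (arealRadius_pos hK) 3))

theorem electricWeyl_eq_neg_two_mul_mass_div (hK : 0 < sheetCurvature φ ℰ) :
    ℰ = -(2 * schwarzschildMass φ ℰ) / arealRadius φ ℰ ^ 3 := by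
  rw [eq_div_iff (pow_pos (arealRadius_pos hK) 3).ne', schwarzschildMass]
  ring

theorem one_sub_two_mul_mass_div_arealRadius (hK : 0 < sheetCurvature φ ℰ) :
    1 - 2 * schwarzschildMass φ ℰ / arealRadius φ ℰ = (arealRadius φ ℰ / 2 * φ) ^ 2 := by
  have hr := (arealRadius_pos hK).ne'
  have hrK := arealRadius_sq_mul_sheetCurvature hK
  rw [sheetCurvature] at hrK
  rw [schwarzschildMass]
  calc 1 - 2 * (-ℰ * arealRadius φ ℰ ^ 3 / 2) / arealRadius φ ℰ
      = 1 + ℰ * arealRadius φ ℰ ^ 2 := by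
        linear_combination ℰ * arealRadius φ ℰ ^ 2 * mul_inv_cancel₀ hr
    _ = (arealRadius φ ℰ / 2 * φ) ^ 2 := by linear_combination -hrK

theorem abs_sheetExpansion_eq (hK : 0 < sheetCurvature φ ℰ) :
    |φ| = 2 / arealRadius φ ℰ *
      Real.sqrt (1 - 2 * schwarzschildMass φ ℰ / arealRadius φ ℰ) := by
  have hr := arealRadius_pos hK
  rw [one_sub_two_mul_mass_div_arealRadius hK, Real.sqrt_sq_eq_abs, abs_mul,
    abs_of_pos (half_pos hr)]
  field_simp

theorem two_mul_mass_le_arealRadius (hK : 0 < sheetCurvature φ ℰ) :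
    2 * schwarzschildMass φ ℰ ≤ arealRadius φ ℰ := by
  rw [← div_le_one (arealRadius_pos hK), ← sub_nonneg, one_sub_two_mul_mass_div_arealRadius hK]
  exact sq_nonneg _

theorem two_mul_mass_eq_arealRadius_iff (hK : 0 < sheetCurvature φ ℰ) :
    2 * schwarzschildMass φ ℰ = arealRadius φ ℰ ↔ φ = 0 := by
  have hr := (arealRadius_pos hK).ne'
  rw [← div_eq_one_iff_eq hr, eq_comm, ← sub_eq_zero, one_sub_two_mul_mass_div_arealRadius hK]
  simp [hr]

end Pointwise

section Propagation

variable {I : Set ℝ} {φ ℰ : ℝ → ℝ} {s : ℝ}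

theorem hasDerivWithinAt_sheetCurvature
    (hφ : HasDerivWithinAt φ (-(1 / 2) * φ s ^ 2 - ℰ s) I s)
    (hℰ : HasDerivWithinAt ℰ (-(3 / 2) * φ s * ℰ s) I s) :
    HasDerivWithinAt (fun t => sheetCurvature (φ t) (ℰ t))
      (-φ s * sheetCurvature (φ s) (ℰ s)) I s := by
  refine (hℰ.neg.add ((hφ.pow 2).const_mul (1 / 4))).congr_deriv ?_
  rw [sheetCurvature]
  push_cast
  ring

theorem hasDerivWithinAt_arealRadius
    (hφ : HasDerivWithinAt φ (-(1 / 2) * φ s ^ 2 - ℰ s) I s)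
    (hℰ : HasDerivWithinAt ℰ (-(3 / 2) * φ s * ℰ s) I s)
    (hK : 0 < sheetCurvature (φ s) (ℰ s)) :
    HasDerivWithinAt (fun t => arealRadius (φ t) (ℰ t))
      (φ s * arealRadius (φ s) (ℰ s) / 2) I s := by
  refine ((hasDerivWithinAt_sheetCurvature hφ hℰ).rpow_const (Or.inl hK.ne')).congr_deriv ?_
  rw [arealRadius, Real.rpow_sub_one hK.ne']
  field_simp

theorem hasDerivWithinAt_schwarzschildMass
    (hφ : HasDerivWithinAt φ (-(1 / 2) * φ s ^ 2 - ℰ s) I s)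
    (hℰ : HasDerivWithinAt ℰ (-(3 / 2) * φ s * ℰ s) I s)
    (hK : 0 < sheetCurvature (φ s) (ℰ s)) :
    HasDerivWithinAt (fun t => schwarzschildMass (φ t) (ℰ t)) 0 I s := by
  have hr := hasDerivWithinAt_arealRadius hφ hℰ hK
  refine ((hℰ.neg.mul (hr.pow 3)).div_const 2).congr_deriv ?_
  simp only [Pi.neg_apply, Pi.pow_apply]
  push_cast
  ring

end Propagation

/-- Covers solutions crossing the throat `r = 2m` of the Einstein–Rosen bridge, where `φ` changes
sign, as well as those of non-positive mass. -/
theorem schwarzschild_background_integration_general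
    {I : Set ℝ} (hI : I.OrdConnected) {φ ℰ : ℝ → ℝ}
    (hφ : ∀ s ∈ I, HasDerivWithinAt φ (-(1 / 2) * φ s ^ 2 - ℰ s) I s)
    (hℰ : ∀ s ∈ I, HasDerivWithinAt ℰ (-(3 / 2) * φ s * ℰ s) I s)
    (hK : ∀ s ∈ I, 0 < sheetCurvature (φ s) (ℰ s)) :
    ∃ m : ℝ, ((∀ s ∈ I, ℰ s < 0) → 0 < m) ∧ ∀ s ∈ I,
      2 * m ≤ arealRadius (φ s) (ℰ s) ∧ (2 * m = arealRadius (φ s) (ℰ s) ↔ φ s = 0) ∧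
      ℰ s = -(2 * m) / arealRadius (φ s) (ℰ s) ^ 3 ∧
      |φ s| = 2 / arealRadius (φ s) (ℰ s) * Real.sqrt (1 - 2 * m / arealRadius (φ s) (ℰ s)) := by
  rcases I.eq_empty_or_nonempty with rfl | ⟨a, ha⟩
  · exact ⟨1, fun _ => one_pos, fun s hs => hs.elim⟩
  refine ⟨schwarzschildMass (φ a) (ℰ a),
    fun hneg => schwarzschildMass_pos (hneg a ha), fun s hs => ?_⟩
  have mass_eq : schwarzschildMass (φ a) (ℰ a) = schwarzschildMass (φ s) (ℰ s) :=
    is_const_of_hasDerivWithinAt_eq_zero hI.convex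
      (fun t ht => hasDerivWithinAt_schwarzschildMass (hφ t ht) (hℰ t ht) (hK t ht)) ha hs
  rw [mass_eq]
  exact ⟨two_mul_mass_le_arealRadius (hK s hs), two_mul_mass_eq_arealRadius_iff (hK s hs),
    electricWeyl_eq_neg_two_mul_mass_div (hK s hs), abs_sheetExpansion_eq (hK s hs)⟩

/-- Integration of the Schwarzschild background equations: if on an open interval
`I` the functions `φ > 0`, `ℰ < 0` satisfy `φ′ = −½φ² − ℰ` and `ℰ′ = −(3/2)φℰ`,
with Gaussian curvature `K = −ℰ + ¼φ² > 0` and areal radius `r = K^{−1/2}`, then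
there is a constant `m > 0` (the Schwarzschild mass) such that on `I`:
`r > 2m`, `ℰ = −2m/r³` and `φ = (2/r)√(1 − 2m/r)`. -/
theorem schwarzschild_background_integration
    (I : Set ℝ) (hIopen : IsOpen I) (hIinterval : I.OrdConnected)
    (φ ℰ : ℝ → ℝ)
    (hφ : ∀ s ∈ I, HasDerivAt φ (-(1 / 2) * (φ s) ^ 2 - ℰ s) s)
    (hℰ : ∀ s ∈ I, HasDerivAt ℰ (-(3 / 2) * φ s * ℰ s) s)
    (hφpos : ∀ s ∈ I, 0 < φ s)
    (hℰneg : ∀ s ∈ I, ℰ s < 0)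
    (hKpos : ∀ s ∈ I, 0 < -ℰ s + (1 / 4) * (φ s) ^ 2) :
    ∃ m : ℝ, 0 < m ∧ ∀ s ∈ I,
      (fun s => (-ℰ s + (1 / 4) * (φ s) ^ 2) ^ (-(1 : ℝ) / 2)) s > 2 * m ∧
      ℰ s = -(2 * m) / ((-ℰ s + (1 / 4) * (φ s) ^ 2) ^ (-(1 : ℝ) / 2)) ^ 3 ∧
      φ s = (2 / ((-ℰ s + (1 / 4) * (φ s) ^ 2) ^ (-(1 : ℝ) / 2))) *
        Real.sqrt (1 - 2 * m / ((-ℰ s + (1 / 4) * (φ s) ^ 2) ^ (-(1 : ℝ) / 2))) := by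
  obtain ⟨m, hm, h⟩ := schwarzschild_background_integration_general hIinterval
    (fun s hs => (hφ s hs).hasDerivWithinAt) (fun s hs => (hℰ s hs).hasDerivWithinAt) hKpos
  refine ⟨m, hm hℰneg, fun s hs => ?_⟩
  obtain ⟨hle, heq, hℰs, hφs⟩ := h s hs
  exact ⟨hle.lt_of_ne (mt heq.1 (hφpos s hs).ne'), hℰs, (abs_of_pos (hφpos s hs)).symm.trans hφs⟩
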